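/- arXiv:2109.10486 — 3 statements merged into one kernel-verified Lean document; each statement's English description precedes it below -/
import Mathlib

section
/- Let Ω be a finite nonempty set, H : Ω → ℝ, and Z(β) = ∑_{x∈Ω} exp(−βH(x)). Fix a real β_k and define the overlap function f(β) = Z((β_k + β)/2)² / (Z(β_k)·Z(β)). Then f is non-increasing on the interval [β_k, ∞). (This makes the predicate 'f(β) ≥ c⁻¹' used in the binary-search cooling-schedule construction monotone.) -/
open scoped BigOperators

/-- Weighted Chebyshev sum inequality. -/
theorem Monovary.sum_mul_mul_sum_mul_le {ι : Type*} [Fintype ι] {w p q : ι → ℝ}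
    (hpq : Monovary p q) (hw : ∀ i, 0 ≤ w i) :
    (∑ i, w i * p i) * ∑ i, w i * q i ≤ (∑ i, w i) * ∑ i, w i * p i * q i := by
  have h_nonneg : 0 ≤ ∑ i, ∑ j, w i * w j * ((p j - p i) * (q j - q i)) :=
    Finset.sum_nonneg fun i _ => Finset.sum_nonneg fun j _ =>
      mul_nonneg (mul_nonneg (hw i) (hw j)) (monovary_iff_forall_mul_nonneg.1 hpq i j)
  have h_expand : ∑ i, ∑ j, w i * w j * ((p j - p i) * (q j - q i)) =
      (∑ i, w i) * (∑ i, w i * p i * q i) + (∑ i, w i * p i * q i) * (∑ i, w i)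
        - (∑ i, w i * p i) * (∑ i, w i * q i) - (∑ i, w i * q i) * ∑ i, w i * p i := by
    simp only [Finset.sum_mul_sum, ← Finset.sum_add_distrib, ← Finset.sum_sub_distrib]
    exact Finset.sum_congr rfl fun i _ => Finset.sum_congr rfl fun j _ => by ring
  linarith

/-- The ratio `Z (u + d) / Z u` of partition functions is non-decreasing in `u`,
in cross-multiplied form. -/
theorem sum_exp_add_mul_sum_exp_le {Ω : Type*} [Fintype Ω] (H : Ω → ℝ) {u s d : ℝ}
    (hus : u ≤ s) (hd : 0 ≤ d) :
    (∑ x, Real.exp (-(u + d) * H x)) * ∑ x, Real.exp (-s * H x) ≤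
      (∑ x, Real.exp (-u * H x)) * ∑ x, Real.exp (-(s + d) * H x) := by
  have h_monovary : Monovary (fun x => Real.exp (-d * H x))
      fun x => Real.exp (-(s - u) * H x) := by
    intro x y hxy
    have h_lt := Real.exp_lt_exp.1 hxy
    refine Real.exp_le_exp.2 ?_
    have h_le : H y ≤ H x := by
      by_contra! h
      nlinarith
    nlinarith
  convert h_monovary.sum_mul_mul_sum_mul_le (w := fun x => Real.exp (-u * H x))
    (fun x => (Real.exp_pos _).le) using 4 <;>
  · simp only [← Real.exp_add]
    ring_nf

/-- The overlap function `f(β) = Z((β_k+β)/2)²/(Z(β_k)Z(β))` is non-increasing on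
`[β_k, ∞)`, which makes the binary-search predicate monotone. -/
theorem overlap_function_antitoneOn
    {Ω : Type*} [Fintype Ω] [Nonempty Ω] (H : Ω → ℝ)
    (Z : ℝ → ℝ) (hZ : ∀ β, Z β = ∑ x, Real.exp (-β * H x))
    (βk : ℝ) (f : ℝ → ℝ)
    (hf : ∀ β, f β = (Z ((βk + β) / 2)) ^ 2 / (Z βk * Z β)) :
    AntitoneOn f (Set.Ici βk) := by
  intro a ha b _ hab
  have ha : βk ≤ a := ha
  have hpos : ∀ β, 0 < Z β := fun β => by
    rw [hZ]
    exact Finset.sum_pos (fun x _ => Real.exp_pos _) Finset.univ_nonempty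
  have h_ratio : ∀ s, (βk + a) / 2 ≤ s →
      Z ((βk + b) / 2) * Z s ≤ Z ((βk + a) / 2) * Z (s + (b - a) / 2) := fun s hs => by
    have h := sum_exp_add_mul_sum_exp_le H hs (d := (b - a) / 2) (by linarith)
    rw [show (βk + a) / 2 + (b - a) / 2 = (βk + b) / 2 by ring] at h
    simpa only [hZ] using h
  have h_lower := h_ratio a (by linarith)
  have h_upper := h_ratio (a + (b - a) / 2) (by linarith)
  rw [show a + (b - a) / 2 + (b - a) / 2 = b by ring] at h_upper
  have h_cross : Z ((βk + b) / 2) ^ 2 * Z a ≤ Z ((βk + a) / 2) ^ 2 * Z b := by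
    have h₁ := mul_le_mul_of_nonneg_left h_lower (hpos ((βk + b) / 2)).le
    have h₂ := mul_le_mul_of_nonneg_left h_upper (hpos ((βk + a) / 2)).le
    linarith
  rw [hf, hf, div_le_div_iff₀ (mul_pos (hpos _) (hpos _)) (mul_pos (hpos _) (hpos _))]
  have h := mul_le_mul_of_nonneg_left h_cross (hpos βk).le
  linarith
end

section
/- Let V be a nonzero finite-dimensional complex inner product space, A : V → V a self-adjoint linear operator with operator norm ‖A‖ ≤ λ_max, and let φ, ψ ∈ V be unit vectors. Let δβ > 0 and suppose E_β := 1 − 2δβ·⟨φ, Aφ⟩ satisfies E_β > 0. Define C = (1/√E_β − 1)·Re⟨φ, ψ⟩ − (δβ/√E_β)·Re⟨ψ, Aφ⟩. Then |C| ≤ 3·δβ·λ_max/√E_β. -/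
open scoped InnerProductSpace

/-- Matrix elements of a bounded operator between unit vectors are bounded by its norm. -/
theorem abs_re_inner_apply_le_opNorm {V : Type*} [NormedAddCommGroup V] [InnerProductSpace ℂ V]
    (A : V →L[ℂ] V) {x y : V} (hx : ‖x‖ = 1) (hy : ‖y‖ = 1) :
    |(⟪x, A y⟫_ℂ).re| ≤ ‖A‖ :=
  calc |(⟪x, A y⟫_ℂ).re| ≤ ‖⟪x, A y⟫_ℂ‖ := Complex.abs_re_le_norm _
    _ ≤ ‖x‖ * ‖A y‖ := norm_inner_le_norm _ _
    _ ≤ ‖A‖ := by simpa [hx, hy] using A.le_opNorm y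

theorem abs_one_sub_sqrt_le {x : ℝ} (hx : 0 ≤ x) : |1 - √x| ≤ |1 - x| := by
  have hfac : 1 - x = (1 - √x) * (1 + √x) := by
    linear_combination Real.sq_sqrt hx
  have hs := Real.sqrt_nonneg x
  rw [hfac, abs_mul, abs_of_nonneg (by positivity : 0 ≤ 1 + √x)]
  exact le_mul_of_one_le_right (abs_nonneg _) (by linarith)

/-- Bound on the component `C_m` of the right-hand side vector in the projected
variational Gibbs sampling linear system. -/
theorem pvgs_C_component_bound
    {V : Type*} [NormedAddCommGroup V] [InnerProductSpace ℂ V]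
    [FiniteDimensional ℂ V] [Nontrivial V]
    (A : V →L[ℂ] V) (hA : IsSelfAdjoint A)
    (lamMax : ℝ) (hAnorm : ‖A‖ ≤ lamMax)
    (φ ψ : V) (hφ : ‖φ‖ = 1) (hψ : ‖ψ‖ = 1)
    (δβ : ℝ) (hδβ : 0 < δβ)
    (Eβ : ℝ) (hEβ : Eβ = 1 - 2 * δβ * (⟪φ, A φ⟫_ℂ).re) (hEpos : 0 < Eβ)
    (C : ℝ)
    (hC : C = (1 / Real.sqrt Eβ - 1) * (⟪φ, ψ⟫_ℂ).re
        - (δβ / Real.sqrt Eβ) * (⟪ψ, A φ⟫_ℂ).re) :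
    |C| ≤ 3 * δβ * lamMax / Real.sqrt Eβ := by
  have hs : 0 < √Eβ := Real.sqrt_pos.mpr hEpos
  have hφφ := (abs_re_inner_apply_le_opNorm A hφ hφ).trans hAnorm
  have hψφ := (abs_re_inner_apply_le_opNorm A hψ hφ).trans hAnorm
  have hφψ : |(⟪φ, ψ⟫_ℂ).re| ≤ 1 := by
    simpa [hφ, hψ] using (Complex.abs_re_le_norm _).trans (norm_inner_le_norm (𝕜 := ℂ) φ ψ)
  have hsqrt : |1 - √Eβ| ≤ 2 * δβ * lamMax := by
    refine (abs_one_sub_sqrt_le hEpos.le).trans ?_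
    rw [hEβ, sub_sub_cancel, abs_mul, abs_of_pos (by positivity : 0 < 2 * δβ)]
    gcongr
  have hCs : C = ((1 - √Eβ) * (⟪φ, ψ⟫_ℂ).re - δβ * (⟪ψ, A φ⟫_ℂ).re) / √Eβ := by
    rw [hC]
    field_simp
  rw [hCs, abs_div, abs_of_pos hs]
  gcongr
  calc |(1 - √Eβ) * (⟪φ, ψ⟫_ℂ).re - δβ * (⟪ψ, A φ⟫_ℂ).re|
      ≤ |1 - √Eβ| * |(⟪φ, ψ⟫_ℂ).re| + δβ * |(⟪ψ, A φ⟫_ℂ).re| := by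
        simpa only [abs_mul, abs_of_pos hδβ] using
          abs_sub ((1 - √Eβ) * (⟪φ, ψ⟫_ℂ).re) (δβ * (⟪ψ, A φ⟫_ℂ).re)
    _ ≤ |1 - √Eβ| * 1 + δβ * lamMax := by gcongr
    _ ≤ 3 * δβ * lamMax := by linarith
end

section
/- Let d ≥ 1, let ψ ∈ ℂ^d be a unit vector, let O = ψψ* − (1/d)·I, and let σ be any d×d positive semidefinite complex matrix with trace 1 (a density matrix). Then Tr(σ)·Tr(O²) + 2·Tr(σO²) ≤ 3. -/
open scoped BigOperators ComplexOrder

/-- The trace of a positive semidefinite matrix against an orthogonal projection is nonnegative. -/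
theorem Matrix.PosSemidef.trace_mul_projection_nonneg {n : Type*} [Fintype n]
    {σ Q : Matrix n n ℂ} (hσ : σ.PosSemidef) (hQ : Q.IsHermitian) (hQQ : Q * Q = Q) :
    0 ≤ (σ * Q).trace := by
  have h := (hσ.conjTranspose_mul_mul_same Q).trace_nonneg
  rwa [hQ.eq, Matrix.trace_mul_comm, ← Matrix.mul_assoc, hQQ, Matrix.trace_mul_comm] at h

/-- Dimension-independent bound on the single-shot classical-shadow variance for the
overlap observable `O = ψψ* − I/d`: for any density matrix `σ`,
`Tr(σ)·Tr(O²) + 2·Tr(σO²) ≤ 3`. -/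
theorem classical_shadow_overlap_variance_bound
    (d : ℕ) (hd : 1 ≤ d)
    (ψ : Fin d → ℂ) (hψ : ∑ i, ‖ψ i‖ ^ 2 = 1)
    (O : Matrix (Fin d) (Fin d) ℂ)
    (hO : O = Matrix.vecMulVec ψ (star ψ) - ((1 : ℂ) / d) • (1 : Matrix (Fin d) (Fin d) ℂ))
    (σ : Matrix (Fin d) (Fin d) ℂ) (hσ : σ.PosSemidef) (htr : σ.trace = 1) :
    (σ.trace * (O * O).trace + 2 * (σ * (O * O)).trace).re ≤ 3 := by
  have hnorm : star ψ ⬝ᵥ ψ = 1 := by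
    simp only [dotProduct, Pi.star_apply, RCLike.star_def, Complex.conj_mul']
    exact_mod_cast hψ
  set P := Matrix.vecMulVec ψ (star ψ) with hP
  have hPH : P.IsHermitian := by
    rw [Matrix.IsHermitian, hP, Matrix.conjTranspose_vecMulVec, star_star]
  have hPP : P * P = P := by
    rw [hP, Matrix.vecMulVec_mul_vecMulVec, hnorm, one_smul]
  have hPtr : P.trace = 1 := by
    rw [hP, Matrix.trace_vecMulVec, dotProduct_comm, hnorm]
  have hf_nonneg : 0 ≤ (σ * P).trace.re :=
    (Complex.le_def.1 (hσ.trace_mul_projection_nonneg hPH hPP)).1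
  have hf_le : (σ * P).trace.re ≤ 1 := by
    have h := (Complex.le_def.1 (hσ.trace_mul_projection_nonneg
      (Matrix.isHermitian_one.sub hPH) (by simp [mul_sub, sub_mul, hPP]))).1
    simpa [mul_sub, htr] using h
  have hd0 : (d : ℂ) ≠ 0 := by exact_mod_cast (by lia : d ≠ 0)
  have hOO : O * O = P - (2 * (1 / d : ℂ)) • P + ((1 / d : ℂ) * (1 / d)) • 1 := by
    rw [hO]
    simp only [sub_mul, mul_sub, hPP, Matrix.smul_mul, Matrix.mul_smul, one_mul, mul_one]
    module
  have htrOO : (O * O).trace = 1 - 1 / d := by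
    rw [hOO]
    simp only [Matrix.trace_add, Matrix.trace_sub, Matrix.trace_smul, hPtr, Matrix.trace_one,
      Fintype.card_fin, smul_eq_mul]
    field_simp
    ring
  have htrσ : (σ * (O * O)).trace
      = (σ * P).trace - 2 * (1 / d : ℂ) * (σ * P).trace + (1 / d : ℂ) * (1 / d) := by
    rw [hOO]
    simp [mul_add, mul_sub, htr]
  have hcast : (1 / d : ℂ) = ((1 / d : ℝ) : ℂ) := by push_cast; rfl
  rw [htr, htrOO, htrσ, hcast]
  set f := (σ * P).trace
  have hre : (1 * (1 - ((1 / d : ℝ) : ℂ)) + 2 * (f - 2 * ((1 / d : ℝ) : ℂ) * f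
      + ((1 / d : ℝ) : ℂ) * ((1 / d : ℝ) : ℂ))).re
      = 1 - (1 / d : ℝ) + 2 * (f.re - 2 * (1 / d) * f.re + (1 / d) * (1 / d)) := by
    generalize (1 / d : ℝ) = t
    simp
  rw [hre]
  have ht_pos : (0 : ℝ) ≤ 1 / d := by positivity
  have ht_le : (1 / d : ℝ) ≤ 1 := by
    rw [div_le_one (by positivity)]
    exact_mod_cast hd
  generalize (1 / d : ℝ) = t at *
  nlinarith [mul_nonneg ht_pos hf_nonneg, mul_nonneg ht_pos (sub_nonneg.2 ht_le)]
end
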